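/- Let S : ℝⁿ → ℝ be continuous, supported in the closed unit ball, with ∫ S = 1 and with ∫ S(y) p(y) dy = 0 for every polynomial p homogeneous of degree j, 1 ≤ j ≤ d. Let f : ℝⁿ → ℝ be of class C^{d+1} with sup_{x ∈ ℝⁿ} ‖D^{d+1} f(x)‖ ≤ M (supremum of the operator norm of the (d+1)-st total derivative). Then for every ζ ≥ 1 and every x ∈ ℝⁿ, |∫_{ℝⁿ} ζⁿ S(ζ y) f(x + y) dy − f(x)| ≤ (M / (d+1)!) (∫_{ℝⁿ} |S(y)| dy) ζ^{−(d+1)}. In words: a normalized mollifier orthogonal to homogeneous polynomials of degrees 1 through d approximates C^{d+1} functions to order ζ^{−(d+1)}, which is the defining estimate of Nash depth. -/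

import Mathlib

open MeasureTheory

/-!
Expand `f (x + y)` to order `d` at `x`. Integrated against a normalized kernel whose moments of
order `1, …, d` vanish, the Taylor polynomial contributes exactly `f x`, because its `k`-th term is
a homogeneous polynomial of degree `k` in `y`. The error is therefore the integral of the Taylor
remainder, which is at most `M / (d + 1)!` times the `(d + 1)`-st absolute moment of the kernel.
Rescaling by `ζ` keeps the vanishing moments and multiplies that absolute moment by `ζ^{-(d + 1)}`.
-/

section Taylor

variable {E F : Type*} [NormedAddCommGroup E] [NormedSpace ℝ E]
  [NormedAddCommGroup F] [NormedSpace ℝ F]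

/-- The Taylor series of `f` at `x`, with the factors `1 / k!` included, so that its partial sums
are the Taylor polynomials; Mathlib's `ftaylorSeries` consists of the bare derivatives. -/
noncomputable def scaledTaylorSeries (f : E → F) (x : E) : FormalMultilinearSeries ℝ E F :=
  fun k ↦ (k.factorial : ℝ)⁻¹ • iteratedFDeriv ℝ k f x

theorem scaledTaylorSeries_zero_apply (f : E → F) (x : E) (v : Fin 0 → E) :
    scaledTaylorSeries f x 0 v = f x := by
  simp [scaledTaylorSeries]

theorem integral_one_sub_pow (d : ℕ) : ∫ t in (0 : ℝ)..1, (1 - t) ^ d = ((d : ℝ) + 1)⁻¹ := by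
  rw [intervalIntegral.integral_comp_sub_left (fun t : ℝ ↦ t ^ d) 1]
  simp

theorem norm_sub_partialSum_scaledTaylorSeries_le [CompleteSpace F] {d : ℕ} {f : E → F} {M : ℝ}
    {x v : E} (hf : ∀ t ∈ Set.Icc (0 : ℝ) 1, ContDiffAt ℝ (d + 1) f (x + t • v))
    (hM : ∀ t ∈ Set.Icc (0 : ℝ) 1, ‖iteratedFDeriv ℝ (d + 1) f (x + t • v)‖ ≤ M) :
    ‖f (x + v) - (scaledTaylorSeries f x).partialSum (d + 1) v‖ ≤
      M / (d + 1).factorial * ‖v‖ ^ (d + 1) := by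
  have hremainder : f (x + v) - (scaledTaylorSeries f x).partialSum (d + 1) v =
      (d.factorial : ℝ)⁻¹ • ∫ t in (0 : ℝ)..1,
        (1 - t) ^ d • iteratedFDeriv ℝ (d + 1) f (x + t • v) fun _ ↦ v := by
    rw [map_add_eq_sum_add_integral_iteratedFDeriv hf]
    exact add_sub_cancel_left _ _
  have hintegrand : ∀ t ∈ Set.Ioc (0 : ℝ) 1,
      ‖(1 - t) ^ d • iteratedFDeriv ℝ (d + 1) f (x + t • v) fun _ ↦ v‖ ≤
        (1 - t) ^ d * (M * ‖v‖ ^ (d + 1)) := fun t ht ↦ by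
    have hweight : 0 ≤ (1 - t) ^ d := pow_nonneg (sub_nonneg.2 ht.2) d
    rw [norm_smul, Real.norm_of_nonneg hweight]
    gcongr
    simpa using ContinuousMultilinearMap.le_of_opNorm_le
      (hM t (Set.Ioc_subset_Icc_self ht)) fun _ ↦ v
  calc ‖f (x + v) - (scaledTaylorSeries f x).partialSum (d + 1) v‖
      = (d.factorial : ℝ)⁻¹ * ‖∫ t in (0 : ℝ)..1,
          (1 - t) ^ d • iteratedFDeriv ℝ (d + 1) f (x + t • v) fun _ ↦ v‖ := by
        rw [hremainder, norm_smul, Real.norm_of_nonneg (by positivity)]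
    _ ≤ (d.factorial : ℝ)⁻¹ * ∫ t in (0 : ℝ)..1, (1 - t) ^ d * (M * ‖v‖ ^ (d + 1)) := by
        gcongr
        exact intervalIntegral.norm_integral_le_of_norm_le zero_le_one
          (Filter.Eventually.of_forall hintegrand)
          (Continuous.intervalIntegrable (by fun_prop) _ _)
    _ = M / (d + 1).factorial * ‖v‖ ^ (d + 1) := by
        rw [intervalIntegral.integral_mul_const, integral_one_sub_pow, Nat.factorial_succ]
        push_cast
        field_simp

end Taylor

section AbsoluteMoments

variable {E : Type*} [NormedAddCommGroup E] {S : E → ℝ}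

theorem norm_pow_mul_abs_le_of_support_subset (hsupp : S.support ⊆ Metric.closedBall 0 1)
    (m : ℕ) (y : E) : ‖y‖ ^ m * |S y| ≤ |S y| := by
  by_cases hy : y ∈ Metric.closedBall (0 : E) 1
  · exact mul_le_of_le_one_left (abs_nonneg _)
      (pow_le_one₀ (norm_nonneg y) (mem_closedBall_zero_iff.1 hy))
  · simp [Function.support_subset_iff'.1 hsupp y hy]

variable [MeasurableSpace E] [OpensMeasurableSpace E] {μ : Measure E}

theorem integrable_norm_pow_mul_of_le {k m : ℕ} (hkm : k ≤ m)
    (hS : Integrable S μ) (hmoment : Integrable (fun y ↦ ‖y‖ ^ m * S y) μ) :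
    Integrable (fun y ↦ ‖y‖ ^ k * S y) μ := by
  have hpow (r : ℝ) (hr : 0 ≤ r) : r ^ k ≤ 1 + r ^ m := by
    rcases le_total r 1 with hr1 | hr1
    · exact (pow_le_one₀ hr hr1).trans (le_add_of_nonneg_right (pow_nonneg hr m))
    · exact (pow_le_pow_right₀ hr1 hkm).trans (le_add_of_nonneg_left zero_le_one)
  refine (hS.norm.add hmoment.norm).mono'
    ((measurable_norm.pow_const k).aestronglyMeasurable.mul hS.aestronglyMeasurable)
    (.of_forall fun y ↦ ?_)
  calc ‖‖y‖ ^ k * S y‖ = ‖y‖ ^ k * ‖S y‖ := by simp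
    _ ≤ (1 + ‖y‖ ^ m) * ‖S y‖ := by gcongr; exact hpow _ (norm_nonneg y)
    _ = ‖S y‖ + ‖‖y‖ ^ m * S y‖ := by simp [add_mul]

theorem integrable_norm_pow_mul_of_support_subset (hS : Integrable S μ)
    (hsupp : S.support ⊆ Metric.closedBall 0 1) (m : ℕ) :
    Integrable (fun y ↦ ‖y‖ ^ m * S y) μ :=
  hS.mono ((measurable_norm.pow_const m).aestronglyMeasurable.mul hS.aestronglyMeasurable)
    (.of_forall fun y ↦ by simpa using norm_pow_mul_abs_le_of_support_subset hsupp m y)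

end AbsoluteMoments

/-- A kernel of order `d` with respect to `μ`: its integral is `1` and its moments of order
`1, …, d` vanish. Moments are taken against continuous multilinear forms on the diagonal, which on
`ℝⁿ` are the homogeneous polynomials. The moments are not required to exist, and a divergent one
counts as `0`, so integrability is a separate hypothesis where it matters. -/
structure IsKernelOfOrder {E : Type*} [NormedAddCommGroup E] [NormedSpace ℝ E] [MeasurableSpace E]
    (S : E → ℝ) (d : ℕ) (μ : Measure E) : Prop where
  integral_eq_one : ∫ y, S y ∂μ = 1
  integral_mul_diagonal_eq_zero : ∀ k, 1 ≤ k → k ≤ d → ∀ L : E [×k]→L[ℝ] ℝ,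
    ∫ y, S y * L (fun _ ↦ y) ∂μ = 0

section VanishingMoments

variable {E F : Type*} [NormedAddCommGroup E] [NormedSpace ℝ E] [MeasurableSpace E]
  [NormedAddCommGroup F] [NormedSpace ℝ F] {S : E → ℝ} {μ : Measure E}

theorem integrable_smul_diagonal [OpensMeasurableSpace E] [SecondCountableTopologyEither E F]
    {k : ℕ} (hS : AEStronglyMeasurable S μ) (hmoment : Integrable (fun y ↦ ‖y‖ ^ k * S y) μ)
    (L : E [×k]→L[ℝ] F) : Integrable (fun y ↦ S y • L fun _ ↦ y) μ := by
  have hdiagonal : Continuous fun y : E ↦ L fun _ ↦ y := by fun_prop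
  refine (hmoment.norm.const_mul ‖L‖).mono' (hS.smul hdiagonal.aestronglyMeasurable)
    (.of_forall fun y ↦ ?_)
  calc ‖S y • L fun _ ↦ y‖ = ‖S y‖ * ‖L fun _ ↦ y‖ := norm_smul _ _
    _ ≤ ‖S y‖ * (‖L‖ * ‖y‖ ^ k) := by
        gcongr
        simpa using L.le_opNorm fun _ ↦ y
    _ = ‖L‖ * ‖‖y‖ ^ k * S y‖ := by
        rw [norm_mul, norm_pow, norm_norm]
        ring

theorem integrable_smul_partialSum [OpensMeasurableSpace E] [SecondCountableTopologyEither E F]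
    {d : ℕ} (hS : Integrable S μ) (hmoment : Integrable (fun y ↦ ‖y‖ ^ d * S y) μ)
    (p : FormalMultilinearSeries ℝ E F) :
    Integrable (fun y ↦ S y • p.partialSum (d + 1) y) μ := by
  simp only [FormalMultilinearSeries.partialSum, Finset.smul_sum]
  exact integrable_finsetSum _ fun k hk ↦ integrable_smul_diagonal hS.1
    (integrable_norm_pow_mul_of_le (Finset.mem_range_succ_iff.1 hk) hS hmoment) (p k)

namespace IsKernelOfOrder

variable {d : ℕ}

theorem integrable (hS : IsKernelOfOrder S d μ) : Integrable S μ :=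
  integrable_of_integral_eq_one hS.integral_eq_one

variable [OpensMeasurableSpace E] [SecondCountableTopologyEither E F] [CompleteSpace F]

theorem integral_smul_diagonal_eq_zero {k : ℕ} (hS : IsKernelOfOrder S d μ)
    (hmoment : Integrable (fun y ↦ ‖y‖ ^ k * S y) μ) (hk : 1 ≤ k) (hkd : k ≤ d)
    (L : E [×k]→L[ℝ] F) : ∫ y, S y • L (fun _ ↦ y) ∂μ = 0 := by
  refine SeparatingDual.eq_zero_of_forall_dual_eq_zero (R := ℝ) fun φ ↦ ?_
  rw [← φ.integral_comp_comm (integrable_smul_diagonal hS.integrable.1 hmoment L)]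
  simpa using hS.integral_mul_diagonal_eq_zero k hk hkd (φ.compContinuousMultilinearMap L)

theorem integral_smul_partialSum (hS : IsKernelOfOrder S d μ)
    (hmoment : Integrable (fun y ↦ ‖y‖ ^ d * S y) μ) (p : FormalMultilinearSeries ℝ E F) :
    ∫ y, S y • p.partialSum (d + 1) y ∂μ = p 0 0 := by
  have hmoment_le {k : ℕ} (hk : k ∈ Finset.range (d + 1)) :=
    integrable_norm_pow_mul_of_le (Finset.mem_range_succ_iff.1 hk) hS.integrable hmoment
  have hpositive_degree : ∀ k ∈ Finset.range d, ∫ y, S y • p (k + 1) (fun _ ↦ y) ∂μ = 0 :=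
    fun k hk ↦ hS.integral_smul_diagonal_eq_zero (hmoment_le (by simpa using hk))
      (Nat.le_add_left 1 k) (Finset.mem_range.1 hk) (p (k + 1))
  have hconstant (y : E) : p 0 (fun _ ↦ y) = p 0 0 := congrArg (p 0) (Subsingleton.elim _ _)
  simp only [FormalMultilinearSeries.partialSum, Finset.smul_sum]
  rw [integral_finsetSum _ fun k hk ↦
      integrable_smul_diagonal hS.integrable.1 (hmoment_le hk) (p k),
    Finset.sum_range_succ', Finset.sum_eq_zero hpositive_degree, zero_add]
  simp only [hconstant, integral_smul_const, hS.integral_eq_one, one_smul]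

theorem norm_integral_smul_sub_le {f : E → F} {M : ℝ} (hS : IsKernelOfOrder S d μ)
    (hmoment : Integrable (fun y ↦ ‖y‖ ^ (d + 1) * S y) μ) (hf : ContDiff ℝ (d + 1) f)
    (hM : ∀ x, ‖iteratedFDeriv ℝ (d + 1) f x‖ ≤ M) (x : E) :
    ‖∫ y, S y • f (x + y) ∂μ - f x‖ ≤
      M / (d + 1).factorial * ∫ y, ‖y‖ ^ (d + 1) * |S y| ∂μ := by
  set P : E → F := (scaledTaylorSeries f x).partialSum (d + 1)
  have hmoment_d := integrable_norm_pow_mul_of_le d.le_succ hS.integrable hmoment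
  have hP_integrable : Integrable (fun y ↦ S y • P y) μ :=
    integrable_smul_partialSum hS.integrable hmoment_d _
  have hP_integral : ∫ y, S y • P y ∂μ = f x := by
    rw [hS.integral_smul_partialSum hmoment_d, scaledTaylorSeries_zero_apply]
  have hbound_integrable :
      Integrable (fun y ↦ M / (d + 1).factorial * (‖y‖ ^ (d + 1) * |S y|)) μ :=
    (hmoment.norm.congr (.of_forall fun y ↦ by simp)).const_mul _
  have hremainder_le (y : E) : ‖S y • (f (x + y) - P y)‖ ≤
      M / (d + 1).factorial * (‖y‖ ^ (d + 1) * |S y|) := by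
    have htaylor := norm_sub_partialSum_scaledTaylorSeries_le (x := x) (v := y)
      (fun _ _ ↦ hf.contDiffAt) fun _ _ ↦ hM _
    rw [norm_smul, Real.norm_eq_abs, mul_comm, ← mul_assoc]
    gcongr
  have hcontinuous : Continuous fun y ↦ f (x + y) - P y :=
    (hf.continuous.comp (continuous_const_add x)).sub
      (FormalMultilinearSeries.partialSum_continuous _ _)
  have hremainder_integrable : Integrable (fun y ↦ S y • (f (x + y) - P y)) μ :=
    hbound_integrable.mono' (hS.integrable.1.smul hcontinuous.aestronglyMeasurable)
      (.of_forall hremainder_le)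
  have hsplit : ∫ y, S y • f (x + y) ∂μ - f x = ∫ y, S y • (f (x + y) - P y) ∂μ := by
    rw [← hP_integral, sub_eq_iff_eq_add, ← integral_add hremainder_integrable hP_integrable]
    simp only [smul_sub, sub_add_cancel]
  rw [hsplit, ← integral_const_mul]
  exact norm_integral_le_of_norm_le hbound_integrable (.of_forall hremainder_le)

end IsKernelOfOrder

end VanishingMoments

section Rescaling

variable {E F : Type*} [NormedAddCommGroup E] [NormedSpace ℝ E]
  [NormedAddCommGroup F] [NormedSpace ℝ F] {S : E → ℝ} {ζ : ℝ}

/-- The rescaled kernel `S_ζ(y) = ζⁿ S(ζ y)`, where `n` is the dimension of the space. -/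
noncomputable def rescaledKernel (ζ : ℝ) (S : E → ℝ) (y : E) : ℝ :=
  ζ ^ Module.finrank ℝ E * S (ζ • y)

theorem abs_rescaledKernel (hζ : 0 < ζ) (S : E → ℝ) (y : E) :
    |rescaledKernel ζ S y| = rescaledKernel ζ (fun z ↦ |S z|) y := by
  rw [rescaledKernel, rescaledKernel, abs_mul, abs_of_pos (pow_pos hζ _)]

variable [MeasurableSpace E] [BorelSpace E] [FiniteDimensional ℝ E] {μ : Measure E}
  [μ.IsAddHaarMeasure]

theorem integral_rescaledKernel_smul (hζ : 0 < ζ) (S : E → ℝ) (g : E → F) :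
    ∫ y, rescaledKernel ζ S y • g y ∂μ = ∫ z, S z • g (ζ⁻¹ • z) ∂μ := by
  have hpow : 0 < ζ ^ Module.finrank ℝ E := pow_pos hζ _
  have hcomp := Measure.integral_comp_smul μ (fun z ↦ S z • g (ζ⁻¹ • z)) ζ
  simp only [inv_smul_smul₀ hζ.ne', abs_of_pos (inv_pos.2 hpow)] at hcomp
  simp only [rescaledKernel, mul_smul, integral_smul, hcomp, smul_inv_smul₀ hpow.ne']

theorem integral_norm_pow_mul_abs_rescaledKernel (hζ : 0 < ζ) (S : E → ℝ) (m : ℕ) :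
    ∫ y, ‖y‖ ^ m * |rescaledKernel ζ S y| ∂μ = ζ⁻¹ ^ m * ∫ z, ‖z‖ ^ m * |S z| ∂μ := by
  have hchange := integral_rescaledKernel_smul (μ := μ) hζ (fun z ↦ |S z|) fun y ↦ ‖y‖ ^ m
  simp only [smul_eq_mul, norm_smul, norm_inv, Real.norm_of_nonneg hζ.le, mul_pow] at hchange
  simp only [abs_rescaledKernel hζ, mul_comm (‖_‖ ^ m), hchange, ← integral_const_mul]
  exact integral_congr_ae (.of_forall fun z ↦ by ring)

theorem integrable_norm_pow_mul_rescaledKernel {m : ℕ} (hζ : 0 < ζ)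
    (hmoment : Integrable (fun y ↦ ‖y‖ ^ m * S y) μ) :
    Integrable (fun y ↦ ‖y‖ ^ m * rescaledKernel ζ S y) μ := by
  refine ((hmoment.comp_smul hζ.ne').const_mul (ζ ^ Module.finrank ℝ E * ζ⁻¹ ^ m)).congr
    (.of_forall fun y ↦ ?_)
  simp only [rescaledKernel, norm_smul, Real.norm_of_nonneg hζ.le, mul_pow, inv_pow]
  field_simp

theorem IsKernelOfOrder.rescaledKernel {d : ℕ} (hS : IsKernelOfOrder S d μ) (hζ : 0 < ζ) :
    IsKernelOfOrder (rescaledKernel ζ S) d μ where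
  integral_eq_one := by
    simpa [hS.integral_eq_one] using
      integral_rescaledKernel_smul (μ := μ) hζ S fun _ ↦ (1 : ℝ)
  integral_mul_diagonal_eq_zero k hk hkd L := by
    have hhomogeneous (z : E) : L (fun _ ↦ ζ⁻¹ • z) = ζ⁻¹ ^ k * L fun _ ↦ z := by
      simpa using L.map_smul_univ (fun _ ↦ ζ⁻¹) fun _ ↦ z
    have hchange := integral_rescaledKernel_smul (μ := μ) hζ S fun y ↦ L fun _ ↦ y
    simp only [hhomogeneous, smul_eq_mul, mul_left_comm (S _), integral_const_mul,
      hS.integral_mul_diagonal_eq_zero k hk hkd L, mul_zero] at hchange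
    exact hchange

theorem statement10_general [CompleteSpace F] {d : ℕ} (hS : IsKernelOfOrder S d μ)
    (hsupp : S.support ⊆ Metric.closedBall 0 1) {f : E → F} {M : ℝ}
    (hf : ContDiff ℝ (d + 1) f) (hM : ∀ x, ‖iteratedFDeriv ℝ (d + 1) f x‖ ≤ M)
    (hζ : 0 < ζ) (x : E) :
    ‖∫ y, rescaledKernel ζ S y • f (x + y) ∂μ - f x‖ ≤
      M / (d + 1).factorial * (∫ y, |S y| ∂μ) * ζ ^ (-((d : ℤ) + 1)) := by
  have hM_nonneg : 0 ≤ M := (norm_nonneg _).trans (hM x)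
  have hmoment := integrable_norm_pow_mul_of_support_subset hS.integrable hsupp (d + 1)
  calc ‖∫ y, rescaledKernel ζ S y • f (x + y) ∂μ - f x‖
      ≤ M / (d + 1).factorial * ∫ y, ‖y‖ ^ (d + 1) * |rescaledKernel ζ S y| ∂μ :=
        (hS.rescaledKernel hζ).norm_integral_smul_sub_le
          (integrable_norm_pow_mul_rescaledKernel hζ hmoment) hf hM x
    _ = M / (d + 1).factorial * (ζ⁻¹ ^ (d + 1) * ∫ y, ‖y‖ ^ (d + 1) * |S y| ∂μ) := by
        rw [integral_norm_pow_mul_abs_rescaledKernel hζ]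
    _ ≤ M / (d + 1).factorial * (ζ⁻¹ ^ (d + 1) * ∫ y, |S y| ∂μ) := by
        gcongr
        · exact hmoment.norm.congr (.of_forall fun y ↦ by simp)
        · exact hS.integrable.abs
        · exact fun y ↦ norm_pow_mul_abs_le_of_support_subset hsupp (d + 1) y
    _ = M / (d + 1).factorial * (∫ y, |S y| ∂μ) * ζ ^ (-((d : ℤ) + 1)) := by
        rw [show ζ ^ (-((d : ℤ) + 1)) = ζ⁻¹ ^ (d + 1) by rw [zpow_neg, inv_pow]; norm_cast]
        ring

end Rescaling

theorem exists_isHomogeneous_eval_eq_diagonal {ι R : Type*} [Finite ι] [CommSemiring R] {k : ℕ}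
    (L : MultilinearMap R (fun _ : Fin k ↦ ι → R) R) :
    ∃ p : MvPolynomial ι R, p.IsHomogeneous k ∧ ∀ y, p.eval y = L fun _ ↦ y := by
  classical
  have := Fintype.ofFinite ι
  refine ⟨∑ r : Fin k → ι, MvPolynomial.C (L fun i ↦ Pi.single (r i) 1) *
    ∏ i, MvPolynomial.X (r i), ?_, fun y ↦ ?_⟩
  · refine MvPolynomial.IsHomogeneous.sum _ _ _ fun r _ ↦ .C_mul ?_ _
    simpa using MvPolynomial.IsHomogeneous.prod Finset.univ (fun i ↦ MvPolynomial.X (R := R) (r i))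
      (fun _ ↦ 1) fun i _ ↦ MvPolynomial.isHomogeneous_X R (r i)
  · have hexpand : (L fun _ ↦ y) = L fun _ ↦ ∑ j, y j • (Pi.single j 1 : ι → R) := by
      rw [← pi_eq_sum_univ' y]
    rw [hexpand, L.map_sum]
    simp only [L.map_smul_univ, map_sum, map_mul, map_prod, MvPolynomial.eval_C,
      MvPolynomial.eval_X, smul_eq_mul, mul_comm]

theorem isKernelOfOrder_of_isHomogeneous {ι : Type*} [Fintype ι] {S : (ι → ℝ) → ℝ} {d : ℕ}
    {μ : Measure (ι → ℝ)} (hS : ∫ y, S y ∂μ = 1)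
    (horth : ∀ (k : ℕ) (p : MvPolynomial ι ℝ), p.IsHomogeneous k → 1 ≤ k → k ≤ d →
      ∫ y, S y * p.eval y ∂μ = 0) :
    IsKernelOfOrder S d μ where
  integral_eq_one := hS
  integral_mul_diagonal_eq_zero k hk hkd L := by
    obtain ⟨p, hp, heval⟩ := exists_isHomogeneous_eval_eq_diagonal L.toMultilinearMap
    simpa [heval] using horth k p hp hk hkd

/-- Let `S : ℝⁿ → ℝ` be continuous, supported in the closed unit ball,
with `∫ S = 1` and `∫ S(y) p(y) dy = 0` for every polynomial `p` homogeneous of degree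
`j`, `1 ≤ j ≤ d`.  Let `f : ℝⁿ → ℝ` be `C^{d+1}` with `‖D^{d+1} f(x)‖ ≤ M` for all `x`.
Then for every `ζ ≥ 1` and every `x`,
`|∫ ζⁿ S(ζ y) f(x + y) dy − f(x)| ≤ (M / (d+1)!) (∫ |S|) ζ^{−(d+1)}`:
a normalized mollifier orthogonal to homogeneous polynomials of degrees `1, …, d`
approximates `C^{d+1}` functions to order `ζ^{−(d+1)}` (the defining estimate of
Nash depth). -/
theorem statement10 (n d : ℕ) (S : (Fin n → ℝ) → ℝ)
    (hScont : Continuous S)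
    (hSsupp : ∀ y : Fin n → ℝ, y ∉ Metric.closedBall (0 : Fin n → ℝ) 1 → S y = 0)
    (hS1 : ∫ y, S y = 1)
    (horth : ∀ (j : ℕ) (p : MvPolynomial (Fin n) ℝ), p.IsHomogeneous j → 1 ≤ j → j ≤ d →
      ∫ y, S y * MvPolynomial.eval y p = 0)
    (f : (Fin n → ℝ) → ℝ) (M : ℝ)
    (hf : ContDiff ℝ (d + 1) f)
    (hM : ∀ x, ‖iteratedFDeriv ℝ (d + 1) f x‖ ≤ M) :
    ∀ ζ : ℝ, 1 ≤ ζ → ∀ x : Fin n → ℝ,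
      |(∫ y, ζ ^ n * S (ζ • y) * f (x + y)) - f x| ≤
        (M / (Nat.factorial (d + 1))) * (∫ y, |S y|) * ζ ^ (-((d : ℤ) + 1)) := by
  intro ζ hζ x
  simpa [rescaledKernel] using statement10_general (isKernelOfOrder_of_isHomogeneous hS1 horth)
    (Function.support_subset_iff'.2 hSsupp) hf hM (one_pos.trans_le hζ) x
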